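/- Assume σ > 0 and ρ0⁺ > ρ0⁻, and let 0 < a < b < g(ρ0⁺ − ρ0⁻)/σ. For each frequency k > 0 and s > 0 let E_k(φ,ψ;s), J(φ,ψ) and μ_k(s) be the corresponding energies and infimum. Then there exist constants C₀, C₁ > 0, depending only on m, ℓ, g, σ, a, b and the profiles ρ0, p, ε0, δ0, such that μ_k(s) ≤ −C₀ + s·C₁ for every k with a ≤ k² ≤ b and every s > 0. -/

import Mathlib

/-!
The divergence-free perturbation `φ = -w'`, `ψ = k w` makes the compressive term `ψ' + k φ` vanish,
so the inviscid energy reduces to `(k² / 2) (σ k² w(0)² + g ∫ ρ0 (w²)')`. If `w` is a bump with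
`w(0) = 1`, increasing on `x ≤ 0` and decreasing on `x ≥ 0`, then the integral tends to `ρ0⁻ - ρ0⁺`
as the support of `w` shrinks to the interface, so the bracket is negative for all `k² ≤ b` as soon
as `σ b < g (ρ0⁺ - ρ0⁻)`. Since `w` does not depend on `k`, the viscous energy and the
normalization of these perturbations are controlled uniformly for `a ≤ k² ≤ b`, and the Rayleigh
quotient gives the bound.
-/

open Set MeasureTheory intervalIntegral Filter Topology

noncomputable section

namespace RT

/-- The piecewise integral `∫_{-m}^0 + ∫_0^ℓ`. -/
def pwInt (m l : ℝ) (f : ℝ → ℝ) : ℝ :=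
  (∫ x in (-m)..(0:ℝ), f x) + ∫ x in (0:ℝ)..l, f x

/-- `f` restricted to `[-m,0)` extends continuously to `[-m,0]`, and `f` restricted to
`(0,ℓ]` extends continuously to `[0,ℓ]`. -/
def PiecewiseCont (m l : ℝ) (f : ℝ → ℝ) : Prop :=
  (∃ F : ℝ → ℝ, ContinuousOn F (Icc (-m) 0) ∧ EqOn f F (Ico (-m) 0)) ∧
  (∃ F : ℝ → ℝ, ContinuousOn F (Icc 0 l) ∧ EqOn f F (Ioc 0 l))

/-- A profile function: the restriction to `[-m,0)` extends continuously to `[-m,0]`, and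
the function is continuous on `[0,ℓ]` (hence right-continuous at `0`). -/
def Profile (m l : ℝ) (f : ℝ → ℝ) : Prop :=
  (∃ F : ℝ → ℝ, ContinuousOn F (Icc (-m) 0) ∧ EqOn f F (Ico (-m) 0)) ∧
  ContinuousOn f (Icc 0 l)

/-- The four steady-state profiles `ρ0, p, ε0, δ0` with their positivity assumptions. -/
def ProfilesHyp (m l : ℝ) (ρ0 p ε0 δ0 : ℝ → ℝ) : Prop :=
  Profile m l ρ0 ∧ Profile m l p ∧ Profile m l ε0 ∧ Profile m l δ0 ∧
  (∀ x ∈ Icc (-m) l, 0 < ρ0 x) ∧ (∀ x ∈ Icc (-m) l, 0 < p x) ∧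
  (∀ x ∈ Icc (-m) l, 0 < ε0 x) ∧ (∀ x ∈ Icc (-m) l, 0 ≤ δ0 x)

/-- `f` is continuous on `[-m,ℓ]` and continuously differentiable on `[-m,0]` and on
`[0,ℓ]`, with piecewise derivative `fd`. -/
def PiecewiseC1 (m l : ℝ) (f fd : ℝ → ℝ) : Prop :=
  ContinuousOn f (Icc (-m) l) ∧
  (∀ x ∈ Ico (-m) 0, HasDerivWithinAt f (fd x) (Icc (-m) 0) x) ∧
  (∀ x ∈ Ioc 0 l, HasDerivWithinAt f (fd x) (Icc 0 l) x) ∧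
  PiecewiseCont m l fd

/-- An admissible pair `(φ,ψ)` with piecewise derivatives `(φd,ψd)`. -/
def Admissible (m l : ℝ) (φ ψ φd ψd : ℝ → ℝ) : Prop :=
  PiecewiseC1 m l φ φd ∧ PiecewiseC1 m l ψ ψd ∧
  φ (-m) = 0 ∧ φ l = 0 ∧ ψ (-m) = 0 ∧ ψ l = 0

/-- The energy `E(φ,ψ;s)`. -/
def energyE (m l g σ k : ℝ) (ρ0 p ε0 δ0 : ℝ → ℝ) (φ ψ φd ψd : ℝ → ℝ) (s : ℝ) : ℝ :=
  σ * k ^ 2 / 2 * (ψ 0) ^ 2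
  + (1 / 2) * pwInt m l (fun x =>
      (s * δ0 x + p x * ρ0 x) * (ψd x + k * φ x) ^ 2 - 2 * g * ρ0 x * k * φ x * ψ x)
  + (s / 2) * pwInt m l (fun x =>
      ε0 x * ((φd x - k * ψ x) ^ 2 + (ψd x - k * φ x) ^ 2
        + (1 / 3) * (ψd x + k * φ x) ^ 2))

/-- The normalization functional `J(φ,ψ)`. -/
def energyJ (m l : ℝ) (ρ0 : ℝ → ℝ) (φ ψ : ℝ → ℝ) : ℝ :=
  (1 / 2) * pwInt m l (fun x => ρ0 x * ((φ x) ^ 2 + (ψ x) ^ 2))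

/-- The viscous part `E1(φ,ψ)` of the energy. -/
def energyE1 (m l k : ℝ) (ε0 δ0 : ℝ → ℝ) (φ ψ φd ψd : ℝ → ℝ) : ℝ :=
  (1 / 2) * pwInt m l (fun x => (δ0 x + ε0 x / 3) * (ψd x + k * φ x) ^ 2)
  + (1 / 2) * pwInt m l (fun x =>
      ε0 x * ((φd x - k * ψ x) ^ 2 + (ψd x - k * φ x) ^ 2))

/-- `μ(s)`: the infimum of `E(·,·;s)` over admissible pairs with `J = 1`. -/
def muInf (m l g σ k : ℝ) (ρ0 p ε0 δ0 : ℝ → ℝ) (s : ℝ) : ℝ :=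
  sInf { e : ℝ | ∃ φ ψ φd ψd : ℝ → ℝ, Admissible m l φ ψ φd ψd ∧
    energyJ m l ρ0 φ ψ = 1 ∧ e = energyE m l g σ k ρ0 p ε0 δ0 φ ψ φd ψd s }

/-- The hydrostatic steady-state relation `ρ0' = -g ρ0 / p` on each piece. -/
def Hydrostatic (m l g : ℝ) (ρ0 p : ℝ → ℝ) : Prop :=
  (∀ x ∈ Ico (-m) 0, HasDerivWithinAt ρ0 (-g * ρ0 x / p x) (Ico (-m) 0) x) ∧
  (∀ x ∈ Ioc 0 l, HasDerivWithinAt ρ0 (-g * ρ0 x / p x) (Ioc 0 l) x)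

end RT

namespace RT

attribute [fun_prop] PiecewiseCont

section PiecewiseCont

variable {m l : ℝ} {f g : ℝ → ℝ}

theorem PiecewiseCont.map₂ {op : ℝ → ℝ → ℝ} (hop : Continuous (Function.uncurry op))
    (hf : PiecewiseCont m l f) (hg : PiecewiseCont m l g) :
    PiecewiseCont m l (fun x => op (f x) (g x)) := by
  obtain ⟨⟨F, hF, hfF⟩, F', hF', hfF'⟩ := hf
  obtain ⟨⟨G, hG, hgG⟩, G', hG', hgG'⟩ := hg
  exact ⟨⟨fun x => op (F x) (G x), hop.comp_continuousOn (hF.prodMk hG),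
      fun x hx => congrArg₂ op (hfF hx) (hgG hx)⟩,
    fun x => op (F' x) (G' x), hop.comp_continuousOn (hF'.prodMk hG'),
      fun x hx => congrArg₂ op (hfF' hx) (hgG' hx)⟩

theorem piecewiseCont_of_continuousOn (hm : 0 ≤ m) (hl : 0 ≤ l)
    (hf : ContinuousOn f (Icc (-m) l)) : PiecewiseCont m l f :=
  ⟨⟨f, hf.mono (Icc_subset_Icc_right hl), fun _ _ => rfl⟩,
    f, hf.mono (Icc_subset_Icc_left (neg_nonpos.2 hm)), fun _ _ => rfl⟩

@[fun_prop]
theorem piecewiseCont_const (c : ℝ) : PiecewiseCont m l (fun _ => c) :=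
  ⟨⟨_, continuousOn_const, fun _ _ => rfl⟩, _, continuousOn_const, fun _ _ => rfl⟩

@[fun_prop]
theorem PiecewiseCont.add (hf : PiecewiseCont m l f) (hg : PiecewiseCont m l g) :
    PiecewiseCont m l (fun x => f x + g x) :=
  hf.map₂ continuous_add hg

@[fun_prop]
theorem PiecewiseCont.sub (hf : PiecewiseCont m l f) (hg : PiecewiseCont m l g) :
    PiecewiseCont m l (fun x => f x - g x) :=
  hf.map₂ continuous_sub hg

@[fun_prop]
theorem PiecewiseCont.mul (hf : PiecewiseCont m l f) (hg : PiecewiseCont m l g) :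
    PiecewiseCont m l (fun x => f x * g x) :=
  hf.map₂ continuous_mul hg

@[fun_prop]
theorem PiecewiseCont.pow (hf : PiecewiseCont m l f) (n : ℕ) :
    PiecewiseCont m l (fun x => f x ^ n) :=
  hf.map₂ (op := fun y _ => y ^ n) (by fun_prop) hf

theorem Profile.piecewiseCont (hf : Profile m l f) : PiecewiseCont m l f :=
  ⟨hf.1, f, hf.2, fun _ _ => rfl⟩

theorem PiecewiseCont.intervalIntegrable_left (hm : 0 ≤ m) (hf : PiecewiseCont m l f) :
    IntervalIntegrable f volume (-m) 0 := by
  obtain ⟨⟨F, hF, hfF⟩, -⟩ := hf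
  have hm' : -m ≤ 0 := neg_nonpos.2 hm
  refine (hF.intervalIntegrable_of_Icc hm').congr_uIoo fun x hx => (hfF ?_).symm
  rw [uIoo_of_le hm'] at hx
  exact Ioo_subset_Ico_self hx

theorem PiecewiseCont.intervalIntegrable_right (hl : 0 ≤ l) (hf : PiecewiseCont m l f) :
    IntervalIntegrable f volume 0 l := by
  obtain ⟨-, F, hF, hfF⟩ := hf
  refine (hF.intervalIntegrable_of_Icc hl).congr_uIoo fun x hx => (hfF ?_).symm
  rw [uIoo_of_le hl] at hx
  exact Ioo_subset_Ioc_self hx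

end PiecewiseCont

section PiecewiseIntegral

variable {m l : ℝ} {f g : ℝ → ℝ}

theorem pwInt_const_mul (c : ℝ) : pwInt m l (fun x => c * f x) = c * pwInt m l f := by
  simp only [pwInt, intervalIntegral.integral_const_mul, mul_add]

theorem pwInt_add (hm : 0 ≤ m) (hl : 0 ≤ l) (hf : PiecewiseCont m l f)
    (hg : PiecewiseCont m l g) :
    pwInt m l (fun x => f x + g x) = pwInt m l f + pwInt m l g := by
  simp only [pwInt]
  rw [integral_add (hf.intervalIntegrable_left hm) (hg.intervalIntegrable_left hm),
    integral_add (hf.intervalIntegrable_right hl) (hg.intervalIntegrable_right hl)]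
  ring

theorem pwInt_mono (hm : 0 ≤ m) (hl : 0 ≤ l) (hf : PiecewiseCont m l f)
    (hg : PiecewiseCont m l g) (h : ∀ x ∈ Icc (-m) l, f x ≤ g x) :
    pwInt m l f ≤ pwInt m l g :=
  add_le_add
    (integral_mono_on (neg_nonpos.2 hm) (hf.intervalIntegrable_left hm)
      (hg.intervalIntegrable_left hm) fun x hx => h x ⟨hx.1, hx.2.trans hl⟩)
    (integral_mono_on hl (hf.intervalIntegrable_right hl)
      (hg.intervalIntegrable_right hl) fun x hx => h x ⟨(neg_nonpos.2 hm).trans hx.1, hx.2⟩)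

theorem pwInt_nonneg (hm : 0 ≤ m) (hl : 0 ≤ l) (h : ∀ x ∈ Icc (-m) l, 0 ≤ f x) :
    0 ≤ pwInt m l f :=
  add_nonneg
    (integral_nonneg (neg_nonpos.2 hm) fun x hx => h x ⟨hx.1, hx.2.trans hl⟩)
    (integral_nonneg hl fun x hx => h x ⟨(neg_nonpos.2 hm).trans hx.1, hx.2⟩)

theorem pwInt_pos (hm : 0 ≤ m) (hl : 0 < l) (hf : ContinuousOn f (Icc 0 l))
    (h : ∀ x ∈ Icc (-m) l, 0 ≤ f x) (h₀ : 0 < f 0) : 0 < pwInt m l f :=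
  add_pos_of_nonneg_of_pos
    (integral_nonneg (neg_nonpos.2 hm) fun x hx => h x ⟨hx.1, hx.2.trans hl.le⟩)
    (integral_pos hl hf (fun x hx => h x ⟨(neg_nonpos.2 hm).trans hx.1.le, hx.2⟩)
      ⟨0, left_mem_Icc.2 hl.le, h₀⟩)

end PiecewiseIntegral

section PiecewiseC1

variable {m l : ℝ} {f fd : ℝ → ℝ}

theorem PiecewiseC1.piecewiseCont (hm : 0 ≤ m) (hl : 0 ≤ l) (hf : PiecewiseC1 m l f fd) :
    PiecewiseCont m l f :=
  piecewiseCont_of_continuousOn hm hl hf.1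

theorem PiecewiseC1.piecewiseCont_deriv (hf : PiecewiseC1 m l f fd) : PiecewiseCont m l fd :=
  hf.2.2.2

theorem PiecewiseC1.const_smul (c : ℝ) (hf : PiecewiseC1 m l f fd) :
    PiecewiseC1 m l (c • f) (c • fd) :=
  ⟨hf.1.const_smul c, fun x hx => (hf.2.1 x hx).const_smul c,
    fun x hx => (hf.2.2.1 x hx).const_smul c, (piecewiseCont_const c).mul hf.2.2.2⟩

theorem piecewiseC1_of_hasDerivAt (hf : ∀ x, HasDerivAt f (fd x) x) (hfd : Continuous fd) :
    PiecewiseC1 m l f fd :=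
  ⟨fun x _ => (hf x).continuousAt.continuousWithinAt, fun x _ => (hf x).hasDerivWithinAt,
    fun x _ => (hf x).hasDerivWithinAt,
    ⟨fd, hfd.continuousOn, fun _ _ => rfl⟩, fd, hfd.continuousOn, fun _ _ => rfl⟩

theorem Admissible.const_smul {φ ψ φd ψd : ℝ → ℝ} (h : Admissible m l φ ψ φd ψd) (c : ℝ) :
    Admissible m l (c • φ) (c • ψ) (c • φd) (c • ψd) := by
  obtain ⟨hφ, hψ, hφm, hφl, hψm, hψl⟩ := h
  exact ⟨hφ.const_smul c, hψ.const_smul c, by simp [hφm], by simp [hφl], by simp [hψm],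
    by simp [hψl]⟩

end PiecewiseC1

section Energy

variable {m l g σ k s : ℝ} {ρ0 p ε0 δ0 φ ψ φd ψd : ℝ → ℝ}

theorem energyE_eq_energyE_zero_add (hm : 0 ≤ m) (hl : 0 ≤ l) (hρ : PiecewiseCont m l ρ0)
    (hp : PiecewiseCont m l p) (hε : PiecewiseCont m l ε0) (hδ : PiecewiseCont m l δ0)
    (h : Admissible m l φ ψ φd ψd) :
    energyE m l g σ k ρ0 p ε0 δ0 φ ψ φd ψd s =
      energyE m l g σ k ρ0 p ε0 δ0 φ ψ φd ψd 0 + s * energyE1 m l k ε0 δ0 φ ψ φd ψd := by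
  have hφ := h.1.piecewiseCont hm hl
  have hψ := h.2.1.piecewiseCont hm hl
  have hφd := h.1.piecewiseCont_deriv
  have hψd := h.2.1.piecewiseCont_deriv
  have integrals_eq :
      pwInt m l (fun x =>
          (s * δ0 x + p x * ρ0 x) * (ψd x + k * φ x) ^ 2 - 2 * g * ρ0 x * k * φ x * ψ x)
        + s * pwInt m l (fun x =>
          ε0 x * ((φd x - k * ψ x) ^ 2 + (ψd x - k * φ x) ^ 2
            + (1 / 3) * (ψd x + k * φ x) ^ 2)) =
      pwInt m l (fun x =>
          (0 * δ0 x + p x * ρ0 x) * (ψd x + k * φ x) ^ 2 - 2 * g * ρ0 x * k * φ x * ψ x)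
        + s * (pwInt m l (fun x => (δ0 x + ε0 x * (1 / 3)) * (ψd x + k * φ x) ^ 2)
          + pwInt m l (fun x => ε0 x * ((φd x - k * ψ x) ^ 2 + (ψd x - k * φ x) ^ 2))) := by
    rw [← pwInt_const_mul, ← pwInt_add hm hl (by fun_prop) (by fun_prop),
      ← pwInt_add hm hl (by fun_prop) (by fun_prop), ← pwInt_const_mul,
      ← pwInt_add hm hl (by fun_prop) (by fun_prop)]
    congr 1
    ext x
    ring
  simp only [energyE, energyE1, div_eq_mul_one_div (ε0 _)]
  linear_combination (1 / 2) * integrals_eq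

theorem energyE1_nonneg (hm : 0 ≤ m) (hl : 0 ≤ l) (hε : ∀ x ∈ Icc (-m) l, 0 ≤ ε0 x)
    (hδ : ∀ x ∈ Icc (-m) l, 0 ≤ δ0 x) : 0 ≤ energyE1 m l k ε0 δ0 φ ψ φd ψd := by
  refine add_nonneg ?_ ?_ <;>
  · refine mul_nonneg one_half_pos.le (pwInt_nonneg hm hl fun x hx => ?_)
    have := hε x hx
    have := hδ x hx
    positivity

theorem neg_abs_mul_energyJ_le_energyE_zero (hm : 0 ≤ m) (hl : 0 ≤ l) (hσ : 0 ≤ σ)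
    (hρ : PiecewiseCont m l ρ0) (hp : PiecewiseCont m l p)
    (hρ_nonneg : ∀ x ∈ Icc (-m) l, 0 ≤ ρ0 x) (hp_nonneg : ∀ x ∈ Icc (-m) l, 0 ≤ p x)
    (h : Admissible m l φ ψ φd ψd) :
    -|g * k| * energyJ m l ρ0 φ ψ ≤ energyE m l g σ k ρ0 p ε0 δ0 φ ψ φd ψd 0 := by
  have hφ := h.1.piecewiseCont hm hl
  have hψ := h.2.1.piecewiseCont hm hl
  have hψd := h.2.1.piecewiseCont_deriv
  have gravity_le (y z : ℝ) : 2 * (g * k) * (y * z) ≤ |g * k| * (y ^ 2 + z ^ 2) := by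
    calc 2 * (g * k) * (y * z) ≤ |2 * (g * k) * (y * z)| := le_abs_self _
      _ = |g * k| * (2 * |y| * |z|) := by simp only [abs_mul, abs_two]; ring
      _ ≤ |g * k| * (|y| ^ 2 + |z| ^ 2) := by gcongr; exact two_mul_le_add_sq _ _
      _ = |g * k| * (y ^ 2 + z ^ 2) := by rw [sq_abs, sq_abs]
  have integral_le :
      -|g * k| * pwInt m l (fun x => ρ0 x * (φ x ^ 2 + ψ x ^ 2)) ≤
        pwInt m l (fun x => (p x * ρ0 x) * (ψd x + k * φ x) ^ 2
          - 2 * g * ρ0 x * k * φ x * ψ x) := by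
    rw [← pwInt_const_mul]
    refine pwInt_mono hm hl (by fun_prop) (by fun_prop) fun x hx => ?_
    have compression_nonneg : 0 ≤ p x * ρ0 x * (ψd x + k * φ x) ^ 2 :=
      mul_nonneg (mul_nonneg (hp_nonneg x hx) (hρ_nonneg x hx)) (sq_nonneg _)
    linarith [mul_le_mul_of_nonneg_left (gravity_le (φ x) (ψ x)) (hρ_nonneg x hx)]
  have surface_nonneg : 0 ≤ σ * k ^ 2 / 2 * ψ 0 ^ 2 := by positivity
  simp only [energyE, energyJ, zero_mul, zero_add, zero_div, add_zero]
  linarith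

theorem energyJ_smul (c : ℝ) : energyJ m l ρ0 (c • φ) (c • ψ) = c ^ 2 * energyJ m l ρ0 φ ψ := by
  simp only [energyJ, Pi.smul_apply, smul_eq_mul]
  rw [mul_left_comm, ← pwInt_const_mul (c ^ 2)]
  congr! 3 with x
  ring

theorem energyE_smul (c : ℝ) :
    energyE m l g σ k ρ0 p ε0 δ0 (c • φ) (c • ψ) (c • φd) (c • ψd) s =
      c ^ 2 * energyE m l g σ k ρ0 p ε0 δ0 φ ψ φd ψd s := by
  simp only [energyE, Pi.smul_apply, smul_eq_mul]
  rw [mul_add, mul_add, mul_left_comm (c ^ 2) (1 / 2), mul_left_comm (c ^ 2) (s / 2),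
    ← pwInt_const_mul (c ^ 2), ← pwInt_const_mul (c ^ 2)]
  congr! 2
  · ring
  · congr! 3 with x
    ring
  · congr! 2 with x
    ring

theorem energyJ_smul_right_mono (hm : 0 ≤ m) (hl : 0 ≤ l) {k' : ℝ} (hρ : PiecewiseCont m l ρ0)
    (hρ_nonneg : ∀ x ∈ Icc (-m) l, 0 ≤ ρ0 x) (hφ : PiecewiseCont m l φ)
    (hψ : PiecewiseCont m l ψ) (hk : k ^ 2 ≤ k' ^ 2) :
    energyJ m l ρ0 φ (k • ψ) ≤ energyJ m l ρ0 φ (k' • ψ) := by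
  simp only [energyJ, Pi.smul_apply, smul_eq_mul, mul_pow _ (ψ _)]
  gcongr
  refine pwInt_mono hm hl (by fun_prop) (by fun_prop) fun x hx => ?_
  have := hρ_nonneg x hx
  gcongr

theorem energyJ_pos (hm : 0 ≤ m) (hl : 0 < l) (hρ : ContinuousOn ρ0 (Icc 0 l))
    (hρ_pos : ∀ x ∈ Icc (-m) l, 0 < ρ0 x) (hφ : ContinuousOn φ (Icc 0 l))
    (hψ : ContinuousOn ψ (Icc 0 l)) (hψ₀ : ψ 0 ≠ 0) : 0 < energyJ m l ρ0 φ ψ := by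
  have hρ₀ : 0 < ρ0 0 := hρ_pos 0 ⟨neg_nonpos.2 hm, hl.le⟩
  refine mul_pos one_half_pos (pwInt_pos hm hl (by fun_prop) (fun x hx => ?_) (by positivity))
  have := hρ_pos x hx
  positivity

end Energy

section RayleighQuotient

variable {m l g σ k s : ℝ} {ρ0 p ε0 δ0 φ ψ φd ψd : ℝ → ℝ}

theorem bddBelow_energyE (hm : 0 ≤ m) (hl : 0 ≤ l) (hσ : 0 ≤ σ) (hs : 0 ≤ s)
    (hprof : ProfilesHyp m l ρ0 p ε0 δ0) :
    BddBelow {e : ℝ | ∃ φ ψ φd ψd : ℝ → ℝ, Admissible m l φ ψ φd ψd ∧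
      energyJ m l ρ0 φ ψ = 1 ∧ e = energyE m l g σ k ρ0 p ε0 δ0 φ ψ φd ψd s} := by
  obtain ⟨hρ, hp, hε, hδ, hρ_pos, hp_pos, hε_pos, hδ_nonneg⟩ := hprof
  refine ⟨-|g * k|, ?_⟩
  rintro _ ⟨φ, ψ, φd, ψd, h, hJ, rfl⟩
  calc -|g * k| = -|g * k| * energyJ m l ρ0 φ ψ := by rw [hJ, mul_one]
    _ ≤ energyE m l g σ k ρ0 p ε0 δ0 φ ψ φd ψd 0 :=
      neg_abs_mul_energyJ_le_energyE_zero hm hl hσ hρ.piecewiseCont hp.piecewiseCont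
        (fun x hx => (hρ_pos x hx).le) (fun x hx => (hp_pos x hx).le) h
    _ ≤ energyE m l g σ k ρ0 p ε0 δ0 φ ψ φd ψd 0 + s * energyE1 m l k ε0 δ0 φ ψ φd ψd :=
      le_add_of_nonneg_right <| mul_nonneg hs <|
        energyE1_nonneg hm hl (fun x hx => (hε_pos x hx).le) hδ_nonneg
    _ = energyE m l g σ k ρ0 p ε0 δ0 φ ψ φd ψd s :=
      (energyE_eq_energyE_zero_add hm hl hρ.piecewiseCont hp.piecewiseCont hε.piecewiseCont
        hδ.piecewiseCont h).symm

theorem muInf_le_energyE_div_energyJ (hm : 0 ≤ m) (hl : 0 ≤ l) (hσ : 0 ≤ σ) (hs : 0 ≤ s)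
    (hprof : ProfilesHyp m l ρ0 p ε0 δ0) (h : Admissible m l φ ψ φd ψd)
    (hJ : 0 < energyJ m l ρ0 φ ψ) :
    muInf m l g σ k ρ0 p ε0 δ0 s ≤
      energyE m l g σ k ρ0 p ε0 δ0 φ ψ φd ψd s / energyJ m l ρ0 φ ψ := by
  have hc : (√(energyJ m l ρ0 φ ψ))⁻¹ ^ 2 = (energyJ m l ρ0 φ ψ)⁻¹ := by
    rw [inv_pow, Real.sq_sqrt hJ.le]
  refine csInf_le (bddBelow_energyE hm hl hσ hs hprof)
    ⟨_, _, _, _, h.const_smul (√(energyJ m l ρ0 φ ψ))⁻¹, ?_, ?_⟩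
  · rw [energyJ_smul, hc, inv_mul_cancel₀ hJ.ne']
  · rw [energyE_smul, hc, inv_mul_eq_div]

theorem muInf_le_of_energy_bounds (hm : 0 ≤ m) (hl : 0 ≤ l) (hσ : 0 ≤ σ) (hs : 0 ≤ s)
    (hprof : ProfilesHyp m l ρ0 p ε0 δ0) (h : Admissible m l φ ψ φd ψd) {J₀ J₁ e₀ e₁ : ℝ}
    (hJ₀ : 0 < J₀) (hJ₀_le : J₀ ≤ energyJ m l ρ0 φ ψ) (hJ_le : energyJ m l ρ0 φ ψ ≤ J₁)
    (he₀ : e₀ ≤ 0) (hE₀ : energyE m l g σ k ρ0 p ε0 δ0 φ ψ φd ψd 0 ≤ e₀)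
    (hE₁ : energyE1 m l k ε0 δ0 φ ψ φd ψd ≤ e₁) :
    muInf m l g σ k ρ0 p ε0 δ0 s ≤ e₀ / J₁ + s * (e₁ / J₀) := by
  have hJ : 0 < energyJ m l ρ0 φ ψ := hJ₀.trans_le hJ₀_le
  obtain ⟨hρ, hp, hε, hδ, -, -, hε_pos, hδ_nonneg⟩ := id hprof
  have he₁ : 0 ≤ e₁ := (energyE1_nonneg hm hl (fun x hx => (hε_pos x hx).le) hδ_nonneg).trans hE₁
  calc muInf m l g σ k ρ0 p ε0 δ0 s
      ≤ energyE m l g σ k ρ0 p ε0 δ0 φ ψ φd ψd s / energyJ m l ρ0 φ ψ :=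
        muInf_le_energyE_div_energyJ hm hl hσ hs hprof h hJ
    _ = energyE m l g σ k ρ0 p ε0 δ0 φ ψ φd ψd 0 / energyJ m l ρ0 φ ψ +
          s * (energyE1 m l k ε0 δ0 φ ψ φd ψd / energyJ m l ρ0 φ ψ) := by
        rw [energyE_eq_energyE_zero_add hm hl hρ.piecewiseCont hp.piecewiseCont
          hε.piecewiseCont hδ.piecewiseCont h, add_div, mul_div_assoc]
    _ ≤ e₀ / energyJ m l ρ0 φ ψ + s * (e₁ / energyJ m l ρ0 φ ψ) := by gcongr
    _ ≤ e₀ / J₁ + s * (e₁ / J₀) := by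
        have inviscid_le : e₀ / energyJ m l ρ0 φ ψ ≤ e₀ / J₁ := by
          rw [← neg_le_neg_iff, ← neg_div, ← neg_div]
          exact div_le_div_of_nonneg_left (neg_nonneg.2 he₀) hJ hJ_le
        gcongr

end RayleighQuotient

section StreamFunction

/-- `w` is a stream function of divergence-free admissible pairs: it is `C²` and vanishes to first
order at both ends of `[-m, l]`, which makes `(-w', k w)` admissible for every frequency `k`. Here
divergence-free means `ψ' + k φ = 0`, and the pair is written `(-deriv w, k • w)`. -/
structure IsStreamFunction (m l : ℝ) (w : ℝ → ℝ) : Prop where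
  contDiff : ContDiff ℝ 2 w
  apply_left : w (-m) = 0
  apply_right : w l = 0
  deriv_left : deriv w (-m) = 0
  deriv_right : deriv w l = 0

variable {m l g σ k : ℝ} {ρ0 p ε0 δ0 w : ℝ → ℝ}

theorem IsStreamFunction.continuous (hw : IsStreamFunction m l w) : Continuous w :=
  hw.contDiff.continuous

theorem IsStreamFunction.continuous_deriv (hw : IsStreamFunction m l w) : Continuous (deriv w) :=
  hw.contDiff.continuous_deriv one_le_two

theorem IsStreamFunction.continuous_deriv_deriv (hw : IsStreamFunction m l w) :
    Continuous (deriv (deriv w)) :=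
  (contDiff_succ_iff_deriv.1 hw.contDiff).2.2.continuous_deriv_one

theorem IsStreamFunction.hasDerivAt (hw : IsStreamFunction m l w) (x : ℝ) :
    HasDerivAt w (deriv w x) x :=
  (hw.contDiff.differentiable two_ne_zero x).hasDerivAt

theorem IsStreamFunction.admissible (hw : IsStreamFunction m l w) (k : ℝ) :
    Admissible m l (-deriv w) (k • w) (-deriv (deriv w)) (k • deriv w) := by
  refine ⟨piecewiseC1_of_hasDerivAt
      (fun x => (hw.contDiff.differentiable_deriv_two x).hasDerivAt.neg)
      hw.continuous_deriv_deriv.neg,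
    (piecewiseC1_of_hasDerivAt hw.hasDerivAt hw.continuous_deriv).const_smul k,
    ?_, ?_, ?_, ?_⟩ <;>
  simp [hw.apply_left, hw.apply_right, hw.deriv_left, hw.deriv_right]

theorem energyE_zero_stream :
    energyE m l g σ k ρ0 p ε0 δ0 (-deriv w) (k • w) (-deriv (deriv w)) (k • deriv w) 0 =
      k ^ 2 / 2 *
        (σ * k ^ 2 * w 0 ^ 2 + g * pwInt m l (fun x => ρ0 x * (2 * (w x * deriv w x)))) := by
  have gravity_eq :
      pwInt m l (fun x => (0 * δ0 x + p x * ρ0 x) * (k * deriv w x + k * -deriv w x) ^ 2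
        - 2 * g * ρ0 x * k * -deriv w x * (k * w x)) =
      g * k ^ 2 * pwInt m l (fun x => ρ0 x * (2 * (w x * deriv w x))) := by
    rw [← pwInt_const_mul]
    congr 1
    ext x
    ring
  simp only [energyE, Pi.neg_apply, Pi.smul_apply, smul_eq_mul]
  rw [gravity_eq]
  ring

theorem energyE1_stream :
    energyE1 m l k ε0 δ0 (-deriv w) (k • w) (-deriv (deriv w)) (k • deriv w) =
      (1 / 2) * pwInt m l (fun x =>
        ε0 x * ((deriv (deriv w) x + k ^ 2 * w x) ^ 2 + (2 * k * deriv w x) ^ 2)) := by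
  have compression_eq (x : ℝ) : k * deriv w x + k * -deriv w x = 0 := by ring
  simp only [energyE1, Pi.neg_apply, Pi.smul_apply, smul_eq_mul, compression_eq]
  rw [show pwInt m l (fun x => (δ0 x + ε0 x / 3) * 0 ^ 2) = 0 by simp [pwInt], mul_zero, zero_add]
  congr! 3 with x
  ring

theorem energyE_zero_stream_le (hg : 0 ≤ g) (hσ : 0 ≤ σ) {a b η : ℝ} (hw₀ : w 0 = 1)
    (hη : pwInt m l (fun x => ρ0 x * (2 * (w x * deriv w x))) ≤ η) (hbη : σ * b + g * η ≤ 0)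
    (hka : a ≤ k ^ 2) (hkb : k ^ 2 ≤ b) :
    energyE m l g σ k ρ0 p ε0 δ0 (-deriv w) (k • w) (-deriv (deriv w)) (k • deriv w) 0 ≤
      a / 2 * (σ * b + g * η) := by
  rw [energyE_zero_stream, hw₀, one_pow, mul_one]
  calc k ^ 2 / 2 * (σ * k ^ 2 + g * pwInt m l (fun x => ρ0 x * (2 * (w x * deriv w x))))
      ≤ k ^ 2 / 2 * (σ * b + g * η) := by gcongr
    _ ≤ a / 2 * (σ * b + g * η) := mul_le_mul_of_nonpos_right (by linarith) hbη

theorem exists_forall_energyE1_stream_le (hm : 0 ≤ m) (hl : 0 ≤ l) (hε : PiecewiseCont m l ε0)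
    (hε_nonneg : ∀ x ∈ Icc (-m) l, 0 ≤ ε0 x) (hw : IsStreamFunction m l w) (b : ℝ) :
    ∃ e₁ > 0, ∀ k, k ^ 2 ≤ b →
      energyE1 m l k ε0 δ0 (-deriv w) (k • w) (-deriv (deriv w)) (k • deriv w) ≤ e₁ := by
  refine ⟨max (pwInt m l (fun x =>
    ε0 x * (deriv (deriv w) x ^ 2 + b ^ 2 * w x ^ 2 + 2 * b * deriv w x ^ 2))) 1,
    by positivity, fun k hb => le_max_of_le_left ?_⟩
  have hw₀ := piecewiseCont_of_continuousOn hm hl hw.continuous.continuousOn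
  have hw₁ := piecewiseCont_of_continuousOn hm hl hw.continuous_deriv.continuousOn
  have hw₂ := piecewiseCont_of_continuousOn hm hl hw.continuous_deriv_deriv.continuousOn
  rw [energyE1_stream, ← pwInt_const_mul]
  refine pwInt_mono hm hl (by fun_prop) (by fun_prop) fun x hx => ?_
  have hε_x := hε_nonneg x hx
  calc 1 / 2 * (ε0 x * ((deriv (deriv w) x + k ^ 2 * w x) ^ 2 + (2 * k * deriv w x) ^ 2))
      ≤ 1 / 2 * (ε0 x * (2 * (deriv (deriv w) x ^ 2 + (k ^ 2 * w x) ^ 2)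
          + (2 * k * deriv w x) ^ 2)) := by gcongr; exact add_sq_le
    _ = ε0 x * (deriv (deriv w) x ^ 2 + (k ^ 2) ^ 2 * w x ^ 2
          + 2 * k ^ 2 * deriv w x ^ 2) := by ring
    _ ≤ ε0 x * (deriv (deriv w) x ^ 2 + b ^ 2 * w x ^ 2 + 2 * b * deriv w x ^ 2) := by gcongr

theorem exists_forall_energyJ_stream_mem_Icc (hm : 0 ≤ m) (hl : 0 < l) (hρ : Profile m l ρ0)
    (hρ_pos : ∀ x ∈ Icc (-m) l, 0 < ρ0 x) (hw : IsStreamFunction m l w) (hw₀ : w 0 ≠ 0) {a b : ℝ}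
    (ha : 0 < a) (hab : a ≤ b) :
    ∃ J₀ > 0, ∃ J₁ > 0, ∀ k, a ≤ k ^ 2 → k ^ 2 ≤ b →
      energyJ m l ρ0 (-deriv w) (k • w) ∈ Icc J₀ J₁ := by
  let J (k : ℝ) : ℝ := energyJ m l ρ0 (-deriv w) (k • w)
  have hJ_mono {k k' : ℝ} : k ^ 2 ≤ k' ^ 2 → J k ≤ J k' :=
    energyJ_smul_right_mono hm hl.le hρ.piecewiseCont (fun x hx => (hρ_pos x hx).le)
      (piecewiseCont_of_continuousOn hm hl.le hw.continuous_deriv.neg.continuousOn)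
      (piecewiseCont_of_continuousOn hm hl.le hw.continuous.continuousOn)
  have ha_sq : √a ^ 2 = a := Real.sq_sqrt ha.le
  have hb_sq : √b ^ 2 = b := Real.sq_sqrt (ha.le.trans hab)
  have hJa : 0 < J √a :=
    energyJ_pos hm hl hρ.2 hρ_pos hw.continuous_deriv.neg.continuousOn
      (hw.continuous.const_smul √a).continuousOn
      (mul_ne_zero (Real.sqrt_pos.2 ha).ne' hw₀)
  have hJb : 0 < J √b := hJa.trans_le (hJ_mono (by rwa [ha_sq, hb_sq]))
  exact ⟨J √a, hJa, J √b, hJb, fun k hka hkb =>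
    ⟨hJ_mono (by rwa [ha_sq]), hJ_mono (by rwa [hb_sq])⟩⟩

end StreamFunction

section Bump

theorem exists_contDiff_unimodal {d : ℝ} (hd : 0 < d) (n : ℕ∞) :
    ∃ w : ℝ → ℝ, ContDiff ℝ n w ∧ w 0 = 1 ∧ 0 ≤ w ∧ (∀ x, d ≤ |x| → w x = 0) ∧
      MonotoneOn w (Iic 0) ∧ AntitoneOn w (Ici 0) := by
  refine ⟨fun x => Real.smoothTransition (1 - (x / d) ^ 2),
    Real.smoothTransition.contDiff.comp (by fun_prop), by simp,
    fun x => Real.smoothTransition.nonneg _,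
    fun x hx => Real.smoothTransition.zero_of_nonpos ?_,
    fun x _ y hy hxy => Real.smoothTransition.monotone ?_,
    fun x hx y _ hxy => Real.smoothTransition.monotone ?_⟩
  · rwa [sub_nonpos, one_le_sq_iff_one_le_abs, abs_div, abs_of_pos hd, one_le_div₀ hd]
  · rw [mem_Iic] at hy
    rw [div_pow, div_pow, ← neg_sq x, ← neg_sq y]
    gcongr
    exact neg_nonneg.2 hy
  · rw [mem_Ici] at hx
    gcongr

variable {w ρ : ℝ → ℝ}

theorem deriv_nonneg_of_monotoneOn_Iic {c x : ℝ} (hw : MonotoneOn w (Iic c)) (hx : x < c) :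
    0 ≤ deriv w x := by
  rw [← derivWithin_of_mem_nhds (Iic_mem_nhds hx)]
  exact hw.derivWithin_nonneg

theorem deriv_nonpos_of_antitoneOn_Ici {c x : ℝ} (hw : AntitoneOn w (Ici c)) (hx : c < x) :
    deriv w x ≤ 0 := by
  rw [← derivWithin_of_mem_nhds (Ici_mem_nhds hx)]
  exact hw.derivWithin_nonpos

theorem deriv_eq_zero_of_nonneg_of_eq_zero {x : ℝ} (hw : 0 ≤ w) (hx : w x = 0) :
    deriv w x = 0 :=
  IsLocalMin.deriv_eq_zero (Eventually.of_forall fun y => hx.trans_le (hw y))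

theorem integral_mul_le_of_hasDerivAt {v v' : ℝ → ℝ} {x y c : ℝ} (hxy : x ≤ y)
    (hv : ∀ t, HasDerivAt v (v' t) t) (hv' : IntervalIntegrable v' volume x y)
    (hρ : IntervalIntegrable (fun t => ρ t * v' t) volume x y)
    (h : ∀ t ∈ Ioo x y, ρ t * v' t ≤ c * v' t) :
    ∫ t in x..y, ρ t * v' t ≤ c * (v y - v x) := by
  rw [← integral_eq_sub_of_hasDerivAt (fun t _ => hv t) hv', ← intervalIntegral.integral_const_mul]
  exact integral_mono_on_of_le_Ioo hxy hρ (hv'.const_mul c) h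

variable {m l : ℝ}

theorem pwInt_mul_deriv_sq_le (hm : 0 ≤ m) (hl : 0 ≤ l) {d c₁ c₂ : ℝ}
    (hρ : PiecewiseCont m l ρ) (hρ_left : ∀ x ∈ Ioo (-d) 0, ρ x ≤ c₁)
    (hρ_right : ∀ x ∈ Ioo 0 d, c₂ ≤ ρ x) (hw : IsStreamFunction m l w) (hw₀ : w 0 = 1)
    (hw_nonneg : 0 ≤ w) (hw_supp : ∀ x, d ≤ |x| → w x = 0) (hw_mono : MonotoneOn w (Iic 0))
    (hw_anti : AntitoneOn w (Ici 0)) :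
    pwInt m l (fun x => ρ x * (2 * (w x * deriv w x))) ≤ c₁ - c₂ := by
  have hv (x : ℝ) : HasDerivAt (w ^ 2) (2 * (w x * deriv w x)) x := by
    refine ((hw.hasDerivAt x).pow 2).congr_deriv ?_
    ring
  have hv' : Continuous fun x => 2 * (w x * deriv w x) :=
    continuous_const.mul (hw.continuous.mul hw.continuous_deriv)
  have hρv' := hρ.mul (piecewiseCont_of_continuousOn hm hl hv'.continuousOn)
  have left_le : ∫ x in (-m)..0, ρ x * (2 * (w x * deriv w x)) ≤
      c₁ * ((w ^ 2) 0 - (w ^ 2) (-m)) := by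
    refine integral_mul_le_of_hasDerivAt (neg_nonpos.2 hm) hv (hv'.intervalIntegrable _ _)
      (hρv'.intervalIntegrable_left hm) fun x hx => ?_
    rcases lt_or_ge (-d) x with hxd | hxd
    · have hw_x : 0 ≤ w x := hw_nonneg x
      have hw'_x : 0 ≤ deriv w x := deriv_nonneg_of_monotoneOn_Iic hw_mono hx.2
      gcongr
      exact hρ_left x ⟨hxd, hx.2⟩
    · simp [hw_supp x ((le_neg_of_le_neg hxd).trans (neg_le_abs x))]
  have right_le : ∫ x in (0)..l, ρ x * (2 * (w x * deriv w x)) ≤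
      c₂ * ((w ^ 2) l - (w ^ 2) 0) := by
    refine integral_mul_le_of_hasDerivAt hl hv (hv'.intervalIntegrable _ _)
      (hρv'.intervalIntegrable_right hl) fun x hx => ?_
    rcases lt_or_ge x d with hxd | hxd
    · refine mul_le_mul_of_nonpos_right (hρ_right x ⟨hx.1, hxd⟩) ?_
      exact mul_nonpos_of_nonneg_of_nonpos zero_le_two <|
        mul_nonpos_of_nonneg_of_nonpos (hw_nonneg x)
          (deriv_nonpos_of_antitoneOn_Ici hw_anti hx.1)
    · simp [hw_supp x (hxd.trans (le_abs_self x))]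
  simp only [Pi.pow_apply, hw₀, hw.apply_left, hw.apply_right] at left_le right_le
  simp only [pwInt]
  linarith

theorem exists_isStreamFunction_pwInt_le (hm : 0 < m) (hl : 0 < l) {ρm ρp η : ℝ}
    (hρ : PiecewiseCont m l ρ) (hρm : Tendsto ρ (𝓝[<] 0) (𝓝 ρm))
    (hρp : Tendsto ρ (𝓝[>] 0) (𝓝 ρp)) (hη : ρm - ρp < η) :
    ∃ w, IsStreamFunction m l w ∧ w 0 = 1 ∧
      pwInt m l (fun x => ρ x * (2 * (w x * deriv w x))) ≤ η := by
  obtain ⟨c, hc_left, hc_right⟩ := exists_between (show ρm < ρp + η by linarith)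
  obtain ⟨r, hr, hρ_left⟩ :=
    mem_nhdsLT_iff_exists_Ioo_subset.1 (hρm.eventually_lt_const hc_left)
  obtain ⟨t, ht, hρ_right⟩ :=
    mem_nhdsGT_iff_exists_Ioo_subset.1 (hρp.eventually_const_lt (sub_lt_iff_lt_add.2 hc_right))
  obtain ⟨d, hd, hd_le⟩ := exists_between (show 0 < min (min m l) (min (-r) t) from
    lt_min (lt_min hm hl) (lt_min (neg_pos.2 hr) ht))
  simp only [lt_min_iff] at hd_le
  obtain ⟨⟨hdm, hdl⟩, hdr, hdt⟩ := hd_le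
  obtain ⟨w, hw, hw₀, hw_nonneg, hw_supp, hw_mono, hw_anti⟩ := exists_contDiff_unimodal hd 2
  have hwm : w (-m) = 0 :=
    hw_supp _ (by rw [abs_neg]; exact hdm.le.trans (le_abs_self m))
  have hwl : w l = 0 := hw_supp _ (hdl.le.trans (le_abs_self l))
  have hw_stream : IsStreamFunction m l w :=
    ⟨hw, hwm, hwl, deriv_eq_zero_of_nonneg_of_eq_zero hw_nonneg hwm,
      deriv_eq_zero_of_nonneg_of_eq_zero hw_nonneg hwl⟩
  refine ⟨w, hw_stream, hw₀, ?_⟩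
  calc pwInt m l (fun x => ρ x * (2 * (w x * deriv w x))) ≤ c - (c - η) :=
        pwInt_mul_deriv_sq_le hm.le hl.le hρ
          (fun x hx => (hρ_left ⟨by linarith [hx.1], hx.2⟩).le)
          (fun x hx => (hρ_right ⟨hx.1, hx.2.trans hdt⟩).le) hw_stream hw₀ hw_nonneg hw_supp
          hw_mono hw_anti
    _ = η := sub_sub_cancel c η

theorem exists_isStreamFunction_energyE_zero_le (hm : 0 < m) (hl : 0 < l) {g σ : ℝ}
    (hg : 0 < g) (hσ : 0 ≤ σ) {ρm ρp a b : ℝ} (hρ : PiecewiseCont m l ρ)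
    (hρm : Tendsto ρ (𝓝[<] 0) (𝓝 ρm)) (hρp : Tendsto ρ (𝓝[>] 0) (𝓝 ρp)) (ha : 0 < a)
    (hb : σ * b < g * (ρp - ρm)) :
    ∃ w, IsStreamFunction m l w ∧ w 0 = 1 ∧ ∃ e₀ < 0, ∀ p ε0 δ0 k, a ≤ k ^ 2 → k ^ 2 ≤ b →
      energyE m l g σ k ρ p ε0 δ0 (-deriv w) (k • w) (-deriv (deriv w)) (k • deriv w) 0 ≤
        e₀ := by
  obtain ⟨η, hη, hηb⟩ : ∃ η, ρm - ρp < η ∧ η < -(σ * b) / g :=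
    exists_between ((lt_div_iff₀' hg).2 (by linarith))
  replace hηb : σ * b + g * η < 0 := by linarith [(lt_div_iff₀' hg).1 hηb]
  obtain ⟨w, hw, hw₀, hw_buoyancy⟩ := exists_isStreamFunction_pwInt_le hm hl hρ hρm hρp hη
  exact ⟨w, hw, hw₀, a / 2 * (σ * b + g * η), mul_neg_of_pos_of_neg (half_pos ha) hηb,
    fun _ _ _ _ => energyE_zero_stream_le hg.le hσ hw₀ hw_buoyancy hηb.le⟩

end Bump

theorem muInf_uniform_negative_bound_general (m l g σ : ℝ) (ρ0 p ε0 δ0 : ℝ → ℝ) (ρ0minus : ℝ)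
    (a b : ℝ) (hm : 0 < m) (hl : 0 < l) (hg : 0 < g) (hσ : 0 ≤ σ)
    (hprof : ProfilesHyp m l ρ0 p ε0 δ0) (hρm : Tendsto ρ0 (𝓝[<] 0) (𝓝 ρ0minus))
    (ha : 0 < a) (hab : a ≤ b) (hb : σ * b < g * (ρ0 0 - ρ0minus)) :
    ∃ C₀ : ℝ, 0 < C₀ ∧ ∃ C₁ : ℝ, 0 < C₁ ∧
      ∀ k s : ℝ, 0 ≤ s → a ≤ k ^ 2 → k ^ 2 ≤ b →
        muInf m l g σ k ρ0 p ε0 δ0 s ≤ -C₀ + s * C₁ := by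
  obtain ⟨hρ, -, hε, -, hρ_pos, -, hε_pos, -⟩ := id hprof
  have hρp : Tendsto ρ0 (𝓝[>] 0) (𝓝 (ρ0 0)) :=
    (hρ.2 0 (left_mem_Icc.2 hl.le)).mono_left (nhdsWithin_le_of_mem (Icc_mem_nhdsGT hl))
  obtain ⟨w, hw, hw₀, e₀, he₀, hE₀⟩ :=
    exists_isStreamFunction_energyE_zero_le hm hl hg hσ hρ.piecewiseCont hρm hρp ha hb
  obtain ⟨e₁, he₁, hE₁⟩ := exists_forall_energyE1_stream_le (δ0 := δ0) hm.le hl.le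
    hε.piecewiseCont (fun x hx => (hε_pos x hx).le) hw b
  obtain ⟨J₀, hJ₀, J₁, hJ₁, hJ⟩ := exists_forall_energyJ_stream_mem_Icc hm.le hl hρ hρ_pos hw
    (hw₀.trans_ne one_ne_zero) ha hab
  refine ⟨-(e₀ / J₁), neg_pos.2 (div_neg_of_neg_of_pos he₀ hJ₁), e₁ / J₀, div_pos he₁ hJ₀,
    fun k s hs hka hkb => ?_⟩
  rw [neg_neg]
  exact muInf_le_of_energy_bounds hm.le hl.le hσ hs hprof (hw.admissible k) hJ₀
    (hJ k hka hkb).1 (hJ k hka hkb).2 he₀.le (hE₀ p ε0 δ0 k hka hkb) (hE₁ k hkb)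

/-- Uniform negativity bound: if `σ > 0`, `ρ0⁺ > ρ0⁻` and `0 < a < b < g(ρ0⁺ - ρ0⁻)/σ`,
then there are constants `C₀, C₁ > 0` with `μ_k(s) ≤ -C₀ + s C₁` for every frequency `k`
with `a ≤ k² ≤ b` and every `s > 0`.  Here `ρ0⁺ = ρ0 0` and `ρ0⁻` is the left limit of
`ρ0` at `0`. -/
theorem muInf_uniform_negative_bound (m l g σ : ℝ) (ρ0 p ε0 δ0 : ℝ → ℝ) (ρ0minus : ℝ)
    (a b : ℝ)
    (hm : 0 < m) (hl : 0 < l) (hg : 0 < g) (hσ : 0 < σ)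
    (hprof : ProfilesHyp m l ρ0 p ε0 δ0)
    (hhydro : Hydrostatic m l g ρ0 p)
    (hρm : Tendsto ρ0 (𝓝[<] 0) (𝓝 ρ0minus))
    (hjump : ρ0minus < ρ0 0)
    (ha : 0 < a) (hab : a < b) (hb : b < g * (ρ0 0 - ρ0minus) / σ) :
    ∃ C₀ : ℝ, 0 < C₀ ∧ ∃ C₁ : ℝ, 0 < C₁ ∧
      ∀ k s : ℝ, 0 < k → 0 < s → a ≤ k ^ 2 → k ^ 2 ≤ b →
        muInf m l g σ k ρ0 p ε0 δ0 s ≤ -C₀ + s * C₁ := by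
  obtain ⟨C₀, hC₀, C₁, hC₁, h⟩ := muInf_uniform_negative_bound_general m l g σ ρ0 p ε0 δ0 ρ0minus
    a b hm hl hg hσ.le hprof hρm ha hab.le ((lt_div_iff₀' hσ).1 hb)
  exact ⟨C₀, hC₀, C₁, hC₁, fun k s _ hs => h k s hs.le⟩

end RT
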